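/- For every natural number n ≥ 0 and every complex s with 0 < Re(s) < 1, ∫_0^∞ x^{n−2+s} · (d^n/dx^n) ln( x/(1 − e^{−x}) ) dx = (−1)^n Γ(n − 1 + s) ζ(s), where the integrand involves the n-th derivative of the function x ↦ ln( x/(1 − e^{−x}) ) on (0, ∞). -/

import Mathlib

open Complex Real MeasureTheory

namespace ZetaAux
open Set Filter Topology Asymptotics

lemma exp_lt {x : ℝ} (h : x < 0) : Real.exp x < 1 := by
  have := Real.exp_lt_exp.2 h
  rwa [Real.exp_zero] at this

noncomputable def f (t : ℝ) : ℝ := Real.log (t / (1 - Real.exp (-t)))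
noncomputable def r (t : ℝ) : ℝ := (Real.exp t - 1)⁻¹

lemma phi_analytic (t : ℝ) : AnalyticAt ℝ (dslope (fun t : ℝ => 1 - Real.exp (-t)) 0) t := by
  have h : AnalyticAt ℝ (fun t : ℝ => 1 - Real.exp (-t)) t := by fun_prop
  by_cases ht : t = 0
  · subst ht
    obtain ⟨p, hp⟩ := h
    exact ⟨_, hp.has_fpower_series_dslope_fslope⟩
  · have h2 : AnalyticAt ℝ (fun t : ℝ => (1 - Real.exp (-t)) / t) t := h.div analyticAt_id ht
    refine h2.congr ?_
    filter_upwards [isOpen_ne.mem_nhds ht] with x hx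
    rw [dslope_of_ne _ hx, slope_def_field]
    simp

lemma phi_zero : dslope (fun t : ℝ => 1 - Real.exp (-t)) 0 0 = 1 := by
  rw [dslope_same]
  have : HasDerivAt (fun t : ℝ => 1 - Real.exp (-t)) (-(Real.exp (-0) * (-1))) 0 :=
    ((hasDerivAt_neg (0:ℝ)).exp).const_sub 1
  rw [this.deriv]; simp

lemma phi_ne (t : ℝ) (ht : t ≠ 0) :
    dslope (fun t : ℝ => 1 - Real.exp (-t)) 0 t = (1 - Real.exp (-t)) / t := by
  rw [dslope_of_ne _ ht, slope_def_field]; simp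

lemma phi_pos (t : ℝ) : 0 < dslope (fun t : ℝ => 1 - Real.exp (-t)) 0 t := by
  rcases lt_trichotomy t 0 with h | h | h
  · rw [phi_ne t h.ne]
    apply div_pos_of_neg_of_neg _ h
    have := Real.one_lt_exp_iff.2 (show 0 < -t by linarith)
    linarith
  · rw [h, phi_zero]; norm_num
  · rw [phi_ne t h.ne']
    apply div_pos _ h
    have := exp_lt (show -t < 0 by linarith)
    linarith

lemma f_eq : f = fun t => - Real.log (dslope (fun t : ℝ => 1 - Real.exp (-t)) 0 t) := by
  funext t
  by_cases ht : t = 0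
  · subst ht; rw [phi_zero]; simp [f]
  · rw [phi_ne t ht, ← Real.log_inv, inv_div]; rfl

lemma f_contDiff (n : ℕ) : ContDiff ℝ n f := by
  rw [f_eq]
  have : ∀ t, AnalyticAt ℝ (fun t => - Real.log (dslope (fun t : ℝ => 1 - Real.exp (-t)) 0 t)) t :=
    fun t => ((phi_analytic t).log (phi_pos t)).neg
  rw [contDiff_iff_contDiffAt]
  exact fun t => (this t).contDiffAt

lemma G_hasDeriv (n : ℕ) (x : ℝ) :
    HasDerivAt (iteratedDeriv n f) (iteratedDeriv (n+1) f x) x := by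
  rw [iteratedDeriv_succ]
  exact ((f_contDiff (n+1)).differentiable_iteratedDeriv n (by exact_mod_cast Nat.lt_succ_self n) x).hasDerivAt

lemma G_cont (n : ℕ) : Continuous (iteratedDeriv n f) :=
  (f_contDiff n).continuous_iteratedDeriv n le_rfl

lemma r_hasDeriv (x : ℝ) (hx : 0 < x) : HasDerivAt r (-(r x + r x ^ 2)) x := by
  have h1 := Real.one_lt_exp_iff.2 hx
  have h2 : Real.exp x - 1 ≠ 0 := by linarith
  have h3 : HasDerivAt r (-Real.exp x / (Real.exp x - 1) ^ 2) x :=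
    ((Real.hasDerivAt_exp x).sub_const 1).inv h2
  convert h3 using 1
  unfold r
  field_simp
  ring

lemma f_deriv (x : ℝ) (hx : 0 < x) : iteratedDeriv 1 f x = x⁻¹ - r x := by
  rw [iteratedDeriv_one]
  have h1 := Real.one_lt_exp_iff.2 hx
  have h2 := exp_lt (show -x < 0 by linarith)
  have h3 : (1 - Real.exp (-x)) ≠ 0 := by linarith
  have h4 : Real.exp x - 1 ≠ 0 := by linarith
  have hd : HasDerivAt (fun t : ℝ => 1 - Real.exp (-t)) (-(Real.exp (-x) * (-1))) x :=
    ((hasDerivAt_neg (x:ℝ)).exp).const_sub 1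
  have := ((hasDerivAt_id x).div hd h3).log (div_ne_zero hx.ne' h3)
  have h5 : deriv f x = _ := this.deriv
  rw [h5]
  simp only [r, id, Pi.div_apply]
  have h6 : Real.exp (-x) = (Real.exp x)⁻¹ := Real.exp_neg x
  have h7 := (Real.exp_pos x).ne'
  have h8 : 1 - (Real.exp x)⁻¹ ≠ 0 := h6 ▸ h3
  rw [h6]
  have h9 : 1 - (Real.exp x)⁻¹ = (Real.exp x - 1) / Real.exp x := by field_simp
  rw [h9]
  field_simp

/-- shape of the higher derivatives -/
lemma G_shape (m : ℕ) : ∃ (c : ℝ) (Q : Polynomial ℝ), ∀ x : ℝ, 0 < x →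
    iteratedDeriv (m+1) f x = c * x ^ (-(m+1:ℝ)) + r x * Q.eval (r x) := by
  induction m with
  | zero =>
    refine ⟨1, -1, fun x hx => ?_⟩
    rw [zero_add, f_deriv x hx]
    simp [Real.rpow_neg_one]
    ring
  | succ m ih =>
    obtain ⟨c, Q, h⟩ := ih
    refine ⟨c * (-(m+1:ℝ)), -(1 + Polynomial.X) * (Q + Polynomial.X * Q.derivative), fun x hx => ?_⟩
    have e : iteratedDeriv (m+1) f =ᶠ[𝓝 x]
        fun x => c * x ^ (-(m+1:ℝ)) + r x * Q.eval (r x) := by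
      filter_upwards [lt_mem_nhds hx] with y hy using h y hy
    rw [iteratedDeriv_succ, e.deriv_eq]
    have hr := r_hasDeriv x hx
    have h1 := (Real.hasDerivAt_rpow_const (p := -(m+1:ℝ)) (Or.inl hx.ne')).const_mul c
    have h2 := hr.mul ((Q.hasDerivAt (r x)).comp x hr)
    have h3 : deriv (fun x => c * x ^ (-(m+1:ℝ)) + r x * Q.eval (r x)) x = _ := (h1.add h2).deriv
    rw [h3]
    have h4 : (-(m+1:ℝ)) - 1 = -(((m+1:ℕ):ℝ)+1) := by push_cast; ring
    rw [h4]
    simp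
    ring

lemma r_exp : r =O[atTop] fun t => Real.exp (-1 * t) := by
  refine IsBigO.of_bound 2 ?_
  filter_upwards [eventually_ge_atTop 1] with x hx
  have h1 : (2:ℝ) ≤ Real.exp x := by linarith [Real.add_one_le_exp x]
  rw [Real.norm_of_nonneg (by rw [r]; exact inv_nonneg.2 (by linarith)), Real.norm_of_nonneg (Real.exp_pos _).le]
  rw [r, neg_one_mul, Real.exp_neg, ← div_eq_mul_inv, inv_eq_one_div, div_le_div_iff₀ (by linarith) (by linarith)]
  linarith

lemma r_tendsto : Tendsto r atTop (𝓝 0) := by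
  apply r_exp.trans_tendsto
  have := Real.tendsto_exp_neg_atTop_nhds_zero
  simpa using this

lemma G_top (m : ℕ) : iteratedDeriv (m+1) f =O[atTop] fun x : ℝ => x ^ (-(m+1:ℝ)) := by
  obtain ⟨c, Q, h⟩ := G_shape m
  have e : iteratedDeriv (m+1) f =ᶠ[atTop]
        fun x => c * x ^ (-(m+1:ℝ)) + r x * Q.eval (r x) := by
    filter_upwards [eventually_gt_atTop 0] with y hy using h y hy
  refine e.trans_isBigO (IsBigO.add ((isBigO_refl _ _).const_mul_left c) ?_)
  have h1 : (fun x => Q.eval (r x)) =O[atTop] fun _ => (1:ℝ) :=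
    ((Q.continuous.tendsto 0).comp r_tendsto).isBigO_one ℝ
  have h2 := (r_exp.trans (isLittleO_exp_neg_mul_rpow_atTop one_pos (-(m+1:ℝ))).isBigO).mul h1
  simpa using h2

lemma f_top (ε : ℝ) (hε : 0 < ε) : f =O[atTop] fun x : ℝ => x ^ ε := by
  have e : f =ᶠ[atTop] fun x => Real.log x - Real.log (1 - Real.exp (-x)) := by
    filter_upwards [eventually_gt_atTop 0] with x hx
    have h2 := exp_lt (show -x < 0 by linarith)
    rw [f, Real.log_div hx.ne' (by linarith)]
  refine e.trans_isBigO (IsBigO.sub (isLittleO_log_rpow_atTop hε).isBigO ?_)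
  have h1 : Tendsto (fun x => Real.log (1 - Real.exp (-x))) atTop (𝓝 (Real.log (1 - 0))) :=
    (Tendsto.log (tendsto_const_nhds.sub Real.tendsto_exp_neg_atTop_nhds_zero) (by norm_num))
  refine (h1.isBigO_one ℝ).trans ?_
  refine IsBigO.of_bound 1 ?_
  filter_upwards [eventually_ge_atTop 1] with x hx
  have := Real.one_le_rpow hx hε.le
  rw [Real.norm_of_nonneg (by linarith : (0:ℝ) ≤ x ^ ε)]
  simpa using this

lemma f_zero : f =O[𝓝[>] 0] fun x : ℝ => x ^ (-(-1:ℝ)) := by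
  have h := (G_hasDeriv 0 0).isBigO_sub
  simp only [iteratedDeriv_zero] at h
  have h0 : f 0 = 0 := by simp [f]
  simp only [h0, sub_zero] at h
  simpa using h.mono nhdsWithin_le_nhds

lemma G_zero (n : ℕ) : iteratedDeriv n f =O[𝓝[>] 0] fun x : ℝ => x ^ (-(0:ℝ)) := by
  have := (((G_cont n).tendsto 0).mono_left (nhdsWithin_le_nhds (s := Ioi 0))).isBigO_one ℝ
  simpa using this

lemma byparts (F F' : ℝ → ℂ) (c : ℂ) (a b : ℝ) (hd : ∀ x : ℝ, 0 < x → HasDerivAt F (F' x) x)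
    (ha : F =O[atTop] fun x : ℝ => x ^ (-a)) (hb : F =O[𝓝[>] 0] fun x : ℝ => x ^ (-b))
    (hca : c.re < a) (hcb : b < c.re) (hF' : MellinConvergent F' (c+1)) :
    mellin F' (c+1) = - c * mellin F c := by
  have hcont : ContinuousOn F (Ioi 0) := fun x hx => (hd x hx).continuousAt.continuousWithinAt
  have hF : MellinConvergent F c :=
    mellinConvergent_of_isBigO_rpow (hcont.locallyIntegrableOn measurableSet_Ioi) ha hca hb hcb
  have hu : ∀ x ∈ Ioi (0:ℝ), HasDerivAt (fun x : ℝ => (x:ℂ) ^ c) (c * (x:ℂ) ^ (c-1)) x := by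
    intro x hx
    have h1 : HasDerivAt (fun z : ℂ => z ^ c) (c * (x:ℂ) ^ (c-1) * 1) (x:ℂ) :=
      (hasDerivAt_id (x:ℂ)).cpow_const (Or.inl (by simpa using hx))
    simpa using h1.comp_ofReal
  have hnorm : ∀ x : ℝ, 0 < x → ‖(x:ℂ) ^ c‖ = x ^ c.re := fun x hx =>
    Complex.norm_cpow_eq_rpow_re_of_pos hx c
  have key : ∀ (l : Filter ℝ) (d : ℝ), (∀ᶠ x in l, 0 < x) → F =O[l] (fun x : ℝ => x ^ (-d)) →
      Tendsto (fun x : ℝ => x ^ (c.re - d)) l (𝓝 0) →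
      Tendsto ((fun x : ℝ => (x:ℂ) ^ c) * F) l (𝓝 0) := by
    intro l d hl h ht
    have h1 : (fun x : ℝ => (x:ℂ) ^ c) =O[l] fun x : ℝ => x ^ c.re := by
      refine IsBigO.of_bound 1 ?_
      filter_upwards [hl] with x hx
      rw [hnorm x hx, one_mul]; exact le_abs_self _
    refine (h1.mul h).trans_tendsto (ht.congr' ?_)
    filter_upwards [hl] with x hx
    rw [sub_eq_add_neg, Real.rpow_add hx]
  have hi := integral_Ioi_mul_deriv_eq_deriv_mul (a' := 0) (b' := 0) hu (fun x hx => hd x hx)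
    (by simpa [MellinConvergent] using! hF')
    (by
      have : IntegrableOn (fun t : ℝ => c • ((t : ℂ) ^ (c - 1) • F t)) (Ioi 0) := hF.smul c
      refine this.congr_fun (fun x hx => ?_) measurableSet_Ioi
      simp [mul_assoc])
    (key _ b self_mem_nhdsWithin hb (by
      have := (Real.continuousAt_rpow_const 0 (c.re - b) (Or.inr (by linarith))).tendsto
      rw [Real.zero_rpow (by linarith)] at this
      exact this.mono_left nhdsWithin_le_nhds))
    (key _ a (eventually_gt_atTop 0) ha (by
      have := tendsto_rpow_neg_atTop (y := a - c.re) (by linarith)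
      simpa using this))
  simp only [mellin, smul_eq_mul, add_sub_cancel_right]
  rw [hi, ← integral_const_mul]
  simp only [sub_self, zero_sub, ← integral_neg]
  congr 1; funext x; ring

noncomputable def G (n : ℕ) (x : ℝ) : ℂ := ((iteratedDeriv n f x : ℝ) : ℂ)

lemma G_hd (n : ℕ) (x : ℝ) : HasDerivAt (G n) (G (n+1) x) x := (G_hasDeriv n x).ofReal_comp

lemma G_li (n : ℕ) : LocallyIntegrableOn (G n) (Ioi 0) :=
  (Complex.continuous_ofReal.comp (G_cont n)).continuousOn.locallyIntegrableOn measurableSet_Ioi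

lemma toC {g : ℝ → ℝ} {k : ℝ → ℝ} {l : Filter ℝ} (h : g =O[l] k) :
    (fun x => ((g x : ℝ) : ℂ)) =O[l] k := by
  refine IsBigO.of_norm_left ?_
  simpa using h.norm_left

lemma G_bounds (n : ℕ) (s : ℂ) (h0 : 0 < s.re) (h1 : s.re < 1) : ∃ a b : ℝ,
    (G n) =O[atTop] (fun x : ℝ => x ^ (-a)) ∧ (G n) =O[𝓝[>] 0] (fun x : ℝ => x ^ (-b)) ∧
    ((n:ℂ) - 1 + s).re < a ∧ b < ((n:ℂ) - 1 + s).re := by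
  rcases n with _ | m
  · refine ⟨-((1 - s.re)/2), -1, ?_, ?_, ?_, ?_⟩
    · rw [neg_neg]; exact toC (by rw [iteratedDeriv_zero]; exact f_top _ (by linarith))
    · exact toC (by rw [iteratedDeriv_zero]; exact f_zero)
    · simp; linarith
    · simp; linarith
  · refine ⟨m+1, 0, toC (G_top m), toC (G_zero _), ?_, ?_⟩
    · simp; linarith
    · simp; positivity

lemma G_conv (n : ℕ) (s : ℂ) (h0 : 0 < s.re) (h1 : s.re < 1) :
    MellinConvergent (G n) ((n:ℂ) - 1 + s) := by
  obtain ⟨a, b, ha, hb, hca, hcb⟩ := G_bounds n s h0 h1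
  exact mellinConvergent_of_isBigO_rpow (G_li n) ha hca hb hcb

lemma G_step (n : ℕ) (s : ℂ) (h0 : 0 < s.re) (h1 : s.re < 1) :
    mellin (G (n+1)) ((n:ℂ) + s) = - ((n:ℂ) - 1 + s) * mellin (G n) ((n:ℂ) - 1 + s) := by
  obtain ⟨a, b, ha, hb, hca, hcb⟩ := G_bounds n s h0 h1
  have e : (n:ℂ) + s = ((n:ℂ) - 1 + s) + 1 := by ring
  have hc := G_conv (n+1) s h0 h1
  have e2 : ((n+1:ℕ):ℂ) - 1 + s = ((n:ℂ) - 1 + s) + 1 := by push_cast; ring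
  rw [e2] at hc
  rw [e]
  exact byparts (G n) (G (n+1)) _ a b (fun x _ => G_hd n x) ha hb hca hcb hc

/-- `h x = 1/(e^x-1) - e^{-x}/x` -/
noncomputable def E (x : ℝ) : ℂ := ((x⁻¹ * Real.exp (-x) : ℝ) : ℂ)
noncomputable def R (x : ℝ) : ℂ := ((r x : ℝ) : ℂ)
noncomputable def H (x : ℝ) : ℂ := R x - E x
noncomputable def D (x : ℝ) : ℂ := ((x⁻¹ * (1 - Real.exp (-x)) : ℝ) : ℂ)

lemma r_cont : ContinuousOn r (Ioi 0) := fun x hx =>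
  (r_hasDeriv x hx).continuousAt.continuousWithinAt

lemma E_cont : ContinuousOn E (Ioi 0) := by
  refine Complex.continuous_ofReal.comp_continuousOn ?_
  exact (continuousOn_inv₀.mono fun x hx => ne_of_gt hx).mul (by fun_prop)

lemma D_cont : ContinuousOn D (Ioi 0) := by
  refine Complex.continuous_ofReal.comp_continuousOn ?_
  exact (continuousOn_inv₀.mono fun x hx => ne_of_gt hx).mul (by fun_prop)

lemma R_cont : ContinuousOn R (Ioi 0) := Complex.continuous_ofReal.comp_continuousOn r_cont

lemma D_zero : D =O[𝓝[>] 0] fun x : ℝ => x ^ (-(0:ℝ)) := by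
  refine toC ?_
  have := ((phi_analytic 0).continuousAt.tendsto.mono_left
    (nhdsWithin_le_nhds (s := Ioi 0))).isBigO_one ℝ
  simp only [neg_zero, Real.rpow_zero]
  refine IsBigO.congr' this ?_ EventuallyEq.rfl
  filter_upwards [self_mem_nhdsWithin] with x hx
  rw [phi_ne x (ne_of_gt hx)]; field_simp

lemma H_eq (x : ℝ) (hx : 0 < x) : H x = D x - G 1 x := by
  simp only [H, R, E, D, G, f_deriv x hx]
  push_cast; ring

lemma H_zero : H =O[𝓝[>] 0] fun x : ℝ => x ^ (-(0:ℝ)) := by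
  refine IsBigO.congr' (D_zero.sub (toC (G_zero 1))) ?_ EventuallyEq.rfl
  filter_upwards [self_mem_nhdsWithin] with x hx using (H_eq x hx).symm

lemma E_top : E =O[atTop] fun x : ℝ => Real.exp (-1 * x) := by
  refine toC (IsBigO.of_bound 1 ?_)
  filter_upwards [eventually_ge_atTop 1] with x hx
  rw [norm_mul, neg_one_mul]
  refine mul_le_mul_of_nonneg_right ?_ (norm_nonneg _)
  rw [Real.norm_of_nonneg (by positivity)]
  exact inv_le_one_of_one_le₀ hx

lemma H_top : H =O[atTop] fun x : ℝ => Real.exp (-1 * x) := (toC r_exp).sub E_top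

lemma H_cont : ContinuousOn H (Ioi 0) := R_cont.sub E_cont

lemma H_diff (s : ℂ) (h0 : 0 < s.re) : DifferentiableAt ℂ (mellin H) s :=
  mellin_differentiableAt_of_isBigO_rpow_exp one_pos
    (H_cont.locallyIntegrableOn measurableSet_Ioi) H_top H_zero h0

lemma E_zero : E =O[𝓝[>] 0] fun x : ℝ => x ^ (-(1:ℝ)) := by
  refine toC (IsBigO.of_bound 1 ?_)
  filter_upwards [self_mem_nhdsWithin] with x hx
  have hx : 0 < x := hx
  rw [norm_mul, Real.rpow_neg_one, one_mul]
  refine mul_le_of_le_one_right (norm_nonneg _) ?_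
  rw [Real.norm_of_nonneg (Real.exp_pos _).le]
  exact Real.exp_le_one_iff.2 (by linarith)

lemma E_conv (s : ℂ) (h : 1 < s.re) : MellinConvergent E s :=
  mellinConvergent_of_isBigO_rpow_exp one_pos
    (E_cont.locallyIntegrableOn measurableSet_Ioi) E_top E_zero h

lemma H_conv (s : ℂ) (h : 0 < s.re) : MellinConvergent H s :=
  mellinConvergent_of_isBigO_rpow_exp one_pos
    (H_cont.locallyIntegrableOn measurableSet_Ioi) H_top H_zero h

lemma E_mellin (s : ℂ) (h : 1 < s.re) : mellin E s = Complex.Gamma (s - 1) := by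
  rw [Complex.Gamma_eq_integral (by simpa using h), Complex.GammaIntegral_eq_mellin, sub_eq_add_neg,
    ← mellin_cpow_smul]
  refine setIntegral_congr_fun measurableSet_Ioi fun t ht => ?_
  simp [E, Complex.cpow_neg_one]

lemma R_mellin (s : ℂ) (h : 1 < s.re) : mellin R s = Complex.Gamma s * riemannZeta s := by
  have hs := hasSum_mellin (a := fun _ : ℕ => 1) (p := fun n : ℕ => (n:ℝ)+1) (F := R) (s := s)
    (fun i => Or.inr (by positivity)) (by linarith) ?_ ?_
  · rw [← hs.tsum_eq, zeta_eq_tsum_one_div_nat_add_one_cpow h, ← tsum_mul_left]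
    congr 1; funext n; push_cast; ring
  · intro t ht
    have ht : 0 < t := ht
    have h1 := hasSum_geometric_of_lt_one (Real.exp_pos (-t)).le (exp_lt (by linarith))
    have h2 := h1.mul_left (Real.exp (-t))
    have h3 : Real.exp (-t) * (1 - Real.exp (-t))⁻¹ = r t := by
      have e1 := Real.one_lt_exp_iff.2 ht
      have h4 : Real.exp t - 1 ≠ 0 := by linarith
      rw [r, Real.exp_neg, ← mul_inv]
      congr 1
      field_simp
    rw [h3] at h2
    have h5 := Complex.hasSum_ofReal.2 h2
    refine h5.congr_fun ?_
    intro n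
    rw [one_mul, ← Real.exp_nat_mul, ← Real.exp_add]
    congr 2; ring
  · have := (summable_nat_add_iff 1).2 (Real.summable_one_div_nat_rpow.2 h)
    simpa using this

lemma H_mellin_gt (s : ℂ) (h : 1 < s.re) :
    (s - 1) * mellin H s = Complex.Gamma s * (riemannZeta₁ s - 1) := by
  have hE := E_conv s h
  have hR : MellinConvergent R s := by
    have := IntegrableOn.add (H_conv s (by linarith)) hE
    refine this.congr_fun (fun x hx => ?_) measurableSet_Ioi
    simp [H]
    ring
  have e : mellin H s = mellin R s - mellin E s := (hasMellin_sub hR hE).2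
  have hs : s - 1 ≠ 0 := by
    intro h'; rw [sub_eq_zero] at h'; rw [h'] at h; simp at h
  rw [e, R_mellin s h, E_mellin s h, riemannZeta_eq_inv_sub_mul (sub_ne_zero.1 hs)]
  have := Complex.Gamma_add_one (s-1) hs
  rw [sub_add_cancel] at this
  rw [mul_sub, ← this]
  field_simp

lemma H_mellin (s : ℂ) (h : 0 < s.re) :
    (s - 1) * mellin H s = Complex.Gamma s * (riemannZeta₁ s - 1) := by
  have ho : IsOpen {z : ℂ | 0 < z.re} := isOpen_lt continuous_const Complex.continuous_re
  have ho1 : IsOpen {z : ℂ | 1 < z.re} := isOpen_lt continuous_const Complex.continuous_re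
  have hc : IsPreconnected {z : ℂ | 0 < z.re} := (convex_halfSpace_re_gt 0).isPreconnected
  have hA : AnalyticOnNhd ℂ (fun s : ℂ => (s - 1) * mellin H s) {z : ℂ | 0 < z.re} :=
    DifferentiableOn.analyticOnNhd (fun z hz => ((by fun_prop : DifferentiableAt ℂ (fun s : ℂ => s - 1) z).mul
      (H_diff z hz)).differentiableWithinAt) ho
  have hB : AnalyticOnNhd ℂ (fun s : ℂ => Complex.Gamma s * (riemannZeta₁ s - 1)) {z : ℂ | 0 < z.re} :=
    DifferentiableOn.analyticOnNhd (fun z hz => ((Complex.differentiableAt_Gamma z (by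
      intro m hm
      have hz : 0 < z.re := hz
      rw [hm] at hz
      simp at hz
      have : (0:ℝ) ≤ m := m.cast_nonneg
      linarith)).mul
      ((differentiable_riemannZeta₁ z).sub_const 1)).differentiableWithinAt) ho
  refine hA.eqOn_of_preconnected_of_eventuallyEq hB hc (z₀ := 2) (by simp) ?_ h
  filter_upwards [ho1.mem_nhds (show (2:ℂ) ∈ {z : ℂ | 1 < z.re} by simp)] with z hz
  exact H_mellin_gt z hz

lemma D_conv (s : ℂ) (h0 : 0 < s.re) (h1 : s.re < 1) : MellinConvergent D s := by
  refine mellinConvergent_of_isBigO_rpow (a := 1) (D_cont.locallyIntegrableOn measurableSet_Ioi)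
    (toC (IsBigO.of_bound 1 ?_)) h1 D_zero h0
  filter_upwards [eventually_gt_atTop 0] with x hx
  rw [norm_mul, Real.rpow_neg_one, one_mul]
  refine mul_le_of_le_one_right (norm_nonneg _) ?_
  have := Real.exp_pos (-x)
  have h2 := exp_lt (show -x < 0 by linarith)
  rw [Real.norm_of_nonneg (by linarith)]
  linarith

lemma D_mellin (s : ℂ) (h0 : 0 < s.re) (h1 : s.re < 1) :
    (s - 1) * mellin D s = - Complex.Gamma s := by
  have e : mellin D s = mellin (fun x : ℝ => ((1 - Real.exp (-x) : ℝ) : ℂ)) (s - 1) := by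
    rw [sub_eq_add_neg s 1, ← mellin_cpow_smul]
    refine setIntegral_congr_fun measurableSet_Ioi fun t ht => ?_
    simp [D, Complex.cpow_neg_one]
  have hb := byparts (fun x : ℝ => ((1 - Real.exp (-x) : ℝ) : ℂ)) (fun x : ℝ => ((Real.exp (-x) : ℝ) : ℂ))
    (s - 1) 0 (-1) ?_ (toC ?_) (toC ?_) (by simpa using h1) (by simpa using h0) ?_
  · rw [sub_add_cancel] at hb
    rw [e, Complex.Gamma_eq_integral h0, Complex.GammaIntegral_eq_mellin, hb]
    ring
  · intro x hx
    have hd : HasDerivAt (fun t : ℝ => 1 - Real.exp (-t)) (-(Real.exp (-x) * (-1))) x :=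
      ((hasDerivAt_neg (x:ℝ)).exp).const_sub 1
    have := hd.ofReal_comp
    simpa using this
  · have : Tendsto (fun x => (1 - Real.exp (-x))) atTop (𝓝 (1 - 0)) :=
      (tendsto_const_nhds.sub Real.tendsto_exp_neg_atTop_nhds_zero)
    simpa using this.isBigO_one ℝ
  · have hd : HasDerivAt (fun t : ℝ => 1 - Real.exp (-t)) (-(Real.exp (-0) * (-1))) 0 :=
      ((hasDerivAt_neg (0:ℝ)).exp).const_sub 1
    have h := hd.isBigO_sub
    simpa using h.mono nhdsWithin_le_nhds
  · rw [sub_add_cancel]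
    refine mellinConvergent_of_isBigO_rpow_exp (a := 1) (b := 0) one_pos
      ((by fun_prop : Continuous _).continuousOn.locallyIntegrableOn measurableSet_Ioi) (toC ?_) (toC ?_) h0
    · simpa using isBigO_refl (fun x : ℝ => Real.exp (-x)) atTop
    · have : Continuous fun x : ℝ => Real.exp (-x) := by fun_prop
      simpa using ((this.tendsto 0).mono_left (nhdsWithin_le_nhds (s := Ioi 0))).isBigO_one ℝ

lemma G_one (s : ℂ) (h0 : 0 < s.re) (h1 : s.re < 1) :
    mellin (G 1) s = - (Complex.Gamma s * riemannZeta s) := by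
  have hs : s - 1 ≠ 0 := by
    intro h'; rw [sub_eq_zero] at h'; rw [h'] at h1; simp at h1
  have e : mellin (G 1) s = mellin D s - mellin H s := by
    rw [← (hasMellin_sub (D_conv s h0 h1) (H_conv s h0)).2]
    refine setIntegral_congr_fun measurableSet_Ioi fun t ht => ?_
    simp [H_eq t ht]
  apply mul_left_cancel₀ hs
  rw [e, mul_sub, D_mellin s h0 h1, H_mellin s h0, riemannZeta_eq_inv_sub_mul (sub_ne_zero.1 hs)]
  field_simp
  ring

lemma ne_aux (n : ℕ) (s : ℂ) (h0 : 0 < s.re) (h1 : s.re < 1) : (n:ℂ) - 1 + s ≠ 0 := by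
  intro h
  have := congrArg Complex.re h
  simp at this
  rcases n with _ | m
  · simp at this; linarith
  · push_cast at this
    have : (0:ℝ) ≤ m := m.cast_nonneg
    linarith

lemma G_all (n : ℕ) (s : ℂ) (h0 : 0 < s.re) (h1 : s.re < 1) :
    mellin (G n) ((n:ℂ) - 1 + s) = (-1 : ℂ) ^ n * Complex.Gamma ((n : ℂ) - 1 + s) * riemannZeta s := by
  have hG : ∀ n : ℕ, Complex.Gamma ((n:ℂ) + s) = ((n:ℂ) - 1 + s) * Complex.Gamma ((n:ℂ) - 1 + s) := by
    intro n
    rw [← Complex.Gamma_add_one _ (ne_aux n s h0 h1)]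
    congr 1; ring
  induction n with
  | zero =>
    apply mul_left_cancel₀ (neg_ne_zero.2 (ne_aux 0 s h0 h1))
    rw [← G_step 0 s h0 h1]
    have := hG 0
    simp only [Nat.cast_zero, zero_add, zero_sub, pow_zero] at *
    rw [G_one s h0 h1, this]
    ring
  | succ n ih =>
    have e2 : ((n+1:ℕ):ℂ) - 1 + s = (n:ℂ) + s := by push_cast; ring
    rw [e2, G_step n s h0 h1, ih, hG n]
    ring

end ZetaAux

theorem integral_iteratedDeriv_log_zeta (n : ℕ) (s : ℂ) (h0 : 0 < s.re) (h1 : s.re < 1) :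
    ∫ x in Set.Ioi (0 : ℝ),
        (x : ℂ) ^ ((n : ℂ) - 2 + s) *
          ((iteratedDeriv n (fun t : ℝ => Real.log (t / (1 - Real.exp (-t)))) x : ℝ) : ℂ) =
      (-1 : ℂ) ^ n * Complex.Gamma ((n : ℂ) - 1 + s) * riemannZeta s := by
  rw [← ZetaAux.G_all n s h0 h1]
  have e : (n:ℂ) - 1 + s - 1 = (n:ℂ) - 2 + s := by ring
  rw [mellin, e]
  rfl
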